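/- Spreading out smoothness over a Henselian pair: let (A, I) be a Henselian pair and let R be a finitely presented A-algebra such that Spec R → Spec A is smooth at every point of V(I·R), i.e. for every prime ideal q of R containing I·R there exists g ∈ R with g ∉ q such that the localization R_g of R away from g is a smooth A-algebra. Then there exists an étale R-algebra R′ such that the induced map R/(I·R) → R′/(I·R′) is an isomorphism and R′ is a smooth A-algebra. -/

import Mathlib

universe u

/-- A ring homomorphism `ρ : R →+* H` exhibits `H` as a Henselization of the pair `(R, K)`:
`(H, K·H)` is a Henselian pair, and every map from `(R, K)` to a Henselian pair factors
uniquely through `ρ`. -/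
def IsHenselization {R H : Type u} [CommRing R] [CommRing H]
    (K : Ideal R) (ρ : R →+* H) : Prop :=
  HenselianRing H (K.map ρ) ∧
    ∀ (C : Type u) [CommRing C] (J : Ideal C), HenselianRing C J →
      ∀ f : R →+* C, K.map f ≤ J → ∃! g : H →+* C, g.comp ρ = f

/-- `φ : A →+* B` is Henselian finitely presented (hfp) with respect to `I`:
`B` is a Henselization of `(R, I·R)` for some finitely presented `A`-algebra `R`. -/
def IsHfp {A B : Type u} [CommRing A] [CommRing B] (φ : A →+* B) (I : Ideal A) : Prop :=
  ∃ (R : Type u) (_ : CommRing R) (ψ : A →+* R) (ρ : R →+* B),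
    ψ.FinitePresentation ∧ ρ.comp ψ = φ ∧ IsHenselization (I.map ψ) ρ

/-- `φ : A →+* B` is h-formally étale with respect to `I`. -/
def IsHFormallyEtale {A B : Type u} [CommRing A] [CommRing B] (φ : A →+* B) (I : Ideal A) :
    Prop :=
  ∀ (E C : Type u) [CommRing E] [CommRing C] (e : A →+* E) (c : A →+* C)
    (p : E →+* C) (u : B →+* C),
    p.comp e = c → u.comp φ = c →
    (∃ N : ℕ, 1 ≤ N ∧ Ideal.map e (I ^ N) = ⊥ ∧ Ideal.map c (I ^ N) = ⊥) →
    Function.Surjective p →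
    (∃ M : ℕ, 1 ≤ M ∧ RingHom.ker p ^ M = ⊥) →
    ∃! v : B →+* E, v.comp φ = e ∧ p.comp v = u

/-- `φ : A →+* B` is h-formally smooth with respect to `I`. -/
def IsHFormallySmooth {A B : Type u} [CommRing A] [CommRing B] (φ : A →+* B) (I : Ideal A) :
    Prop :=
  ∀ (E C : Type u) [CommRing E] [CommRing C] (e : A →+* E) (c : A →+* C)
    (p : E →+* C) (u : B →+* C),
    p.comp e = c → u.comp φ = c →
    (∃ N : ℕ, 1 ≤ N ∧ Ideal.map e (I ^ N) = ⊥ ∧ Ideal.map c (I ^ N) = ⊥) →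
    Function.Surjective p →
    (∃ M : ℕ, 1 ≤ M ∧ RingHom.ker p ^ M = ⊥) →
    ∃ v : B →+* E, v.comp φ = e ∧ p.comp v = u

/-- `φ : A →+* B` is h-étale with respect to `I`: `B` is a Henselization of `(R, I·R)`
for some étale `A`-algebra `R`. -/
def IsHEtale {A B : Type u} [CommRing A] [CommRing B] (φ : A →+* B) (I : Ideal A) : Prop :=
  ∃ (R : Type u) (_ : CommRing R) (_ : Algebra A R) (ρ : R →+* B),
    Algebra.Etale A R ∧ ρ.comp (algebraMap A R) = φ ∧
      IsHenselization (I.map (algebraMap A R)) ρ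

/-- `φ : A →+* B` is h-smooth with respect to `I`: `B` is a Henselization of `(R, I·R)`
for some smooth `A`-algebra `R`. -/
def IsHSmooth {A B : Type u} [CommRing A] [CommRing B] (φ : A →+* B) (I : Ideal A) : Prop :=
  ∃ (R : Type u) (_ : CommRing R) (_ : Algebra A R) (ρ : R →+* B),
    Algebra.Smooth A R ∧ ρ.comp (algebraMap A R) = φ ∧
      IsHenselization (I.map (algebraMap A R)) ρ

/-- A ring homomorphism is flat if it makes the target into a flat module over the source. -/
def RingHomFlat {A C : Type u} [CommRing A] [CommRing C] (f : A →+* C) : Prop :=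
  letI := f.toAlgebra
  Module.Flat A C

/-- A ring homomorphism is smooth if it makes the target into a smooth algebra over the
source (smooth = formally smooth + finitely presented). -/
def RingHomSmooth {A C : Type u} [CommRing A] [CommRing C] (f : A →+* C) : Prop :=
  letI := f.toAlgebra
  Algebra.Smooth A C

/-- A ring homomorphism is étale if it makes the target into an étale algebra over the
source (étale = formally étale + finitely presented). -/
def RingHomEtale {A C : Type u} [CommRing A] [CommRing C] (f : A →+* C) : Prop :=
  letI := f.toAlgebra
  Algebra.Etale A C

/-!
The elements `g` of `R` for which `R_g` is smooth over `A` generate an ideal `J` that lies in no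
prime containing `I·R`, so `J + I·R = R` and some `f ∈ J` is congruent to `1` modulo `I·R`. The
open subscheme `D(f)` is covered by open subschemes smooth over `A`, so `R' = R_f` is smooth over
`A`; and inverting `f` changes nothing modulo `I·R`.
-/

theorem exists_mem_span_one_sub_mem {R : Type*} [CommRing R] {K : Ideal R} {s : Set R}
    (hs : ∀ m : Ideal R, m.IsMaximal → K ≤ m → ∃ g ∈ s, g ∉ m) :
    ∃ f ∈ Ideal.span s, 1 - f ∈ K := by
  have sup_eq_top : Ideal.span s ⊔ K = ⊤ := by
    by_contra hne
    obtain ⟨m, hm, hle⟩ := Ideal.exists_le_maximal _ hne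
    obtain ⟨g, hgs, hgm⟩ := hs m hm (le_sup_right.trans hle)
    exact hgm (hle (Ideal.mem_sup_left (Ideal.subset_span hgs)))
  obtain ⟨f, hf, k, hk, hfk⟩ :=
    Ideal.isCoprime_iff_exists.1 (Ideal.isCoprime_iff_sup_eq.2 sup_eq_top)
  exact ⟨f, hf, by rwa [← hfk, add_sub_cancel_left]⟩

theorem bijective_quotientMap_of_isLocalization {R : Type*} [CommRing R] {K : Ideal R}
    {M : Submonoid R} (hM : ∀ m ∈ M, IsUnit (Ideal.Quotient.mk K m))
    (S : Type*) [CommRing S] [Algebra R S] [IsLocalization M S] :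
    Function.Bijective (Ideal.quotientMap (K.map (algebraMap R S)) (algebraMap R S)
      Ideal.le_comap_map) := by
  have map_le_units : Algebra.algebraMapSubmonoid (R ⧸ K) M ≤ IsUnit.submonoid (R ⧸ K) := by
    rintro _ ⟨m, hm, rfl⟩
    exact hM m hm
  exact (IsLocalization.atUnits (R ⧸ K) _ (S := S ⧸ K.map (algebraMap R S)) map_le_units).bijective

theorem bijective_quotientMap_of_isLocalizationAway {R : Type*} [CommRing R] {K : Ideal R} {f : R}
    (hf : IsUnit (Ideal.Quotient.mk K f))
    (S : Type*) [CommRing S] [Algebra R S] [IsLocalization.Away f S] :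
    Function.Bijective (Ideal.quotientMap (K.map (algebraMap R S)) (algebraMap R S)
      Ideal.le_comap_map) := by
  refine bijective_quotientMap_of_isLocalization (M := Submonoid.powers f) ?_ S
  rintro _ ⟨n, rfl⟩
  rw [map_pow]
  exact hf.pow n

open TensorProduct in
attribute [local instance] Algebra.TensorProduct.rightAlgebra in
theorem propertyIsLocal_comp_away_of_mem_span
    {P : ∀ {R S : Type u} [CommRing R] [CommRing S], (R →+* S) → Prop}
    (hP : RingHom.PropertyIsLocal P) {A R : Type u} [CommRing A] [CommRing R] {φ : A →+* R}
    {s : Set R} (hs : ∀ g ∈ s, P ((algebraMap R (Localization.Away g)).comp φ))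
    {f : R} (hf : f ∈ Ideal.span s)
    (S : Type u) [CommRing S] [Algebra R S] [IsLocalization.Away f S] :
    P ((algebraMap R S).comp φ) := by
  have span_eq_top : Ideal.span (algebraMap R S '' s) = ⊤ := by
    rw [← Ideal.map_span]
    exact Ideal.eq_top_of_isUnit_mem _ (Ideal.mem_map_of_mem _ hf)
      (IsLocalization.Away.algebraMap_isUnit f)
  refine hP.ofLocalizationSpanTarget.ofIsLocalization hP.respectsIso _ _ span_eq_top ?_
  rintro ⟨_, g, hg, rfl⟩
  -- `S ⊗[R] R_g` is the localization of `S` away from `g` and of `R_g` away from `f`.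
  refine ⟨S ⊗[R] Localization.Away g, inferInstance, inferInstance, inferInstance, ?_⟩
  have hfg := hP.StableUnderCompositionWithLocalizationAwayTarget (S ⊗[R] Localization.Away g)
    (algebraMap R (Localization.Away g) f) _ (hs g hg)
  rwa [← RingHom.comp_assoc, ← IsScalarTower.algebraMap_eq] at hfg ⊢

theorem exists_etale_smooth_of_smooth_on_closed_fiber_general
    {A R : Type u} [CommRing A] [CommRing R] (φ : A →+* R) (K : Ideal R)
    (hsm : ∀ q : Ideal R, q.IsPrime → K ≤ q →
      ∃ g : R, g ∉ q ∧ ((algebraMap R (Localization.Away g)).comp φ).Smooth) :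
    ∃ (R' : Type u) (_ : CommRing R') (_ : Algebra R R'),
      Algebra.Etale R R' ∧
      Function.Bijective (Ideal.quotientMap (K.map (algebraMap R R')) (algebraMap R R')
        Ideal.le_comap_map) ∧
      ((algebraMap R R').comp φ).Smooth := by
  obtain ⟨f, hf, hfK⟩ : ∃ f ∈ Ideal.span {g : R |
      ((algebraMap R (Localization.Away g)).comp φ).Smooth}, 1 - f ∈ K := by
    refine exists_mem_span_one_sub_mem fun m hm hKm => ?_
    obtain ⟨g, hgm, hg⟩ := hsm m hm.isPrime hKm
    exact ⟨g, hg, hgm⟩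
  have mk_f_eq_one : Ideal.Quotient.mk K f = 1 := (Ideal.Quotient.eq.2 hfK).symm
  exact ⟨Localization.Away f, inferInstance, inferInstance,
    Algebra.Etale.of_isLocalizationAway f,
    bijective_quotientMap_of_isLocalizationAway (mk_f_eq_one ▸ isUnit_one) _,
    propertyIsLocal_comp_away_of_mem_span RingHom.Smooth.propertyIsLocal (fun _ hg => hg) hf _⟩

/-- Spreading out smoothness over a Henselian pair: if `Spec R → Spec A` is smooth at every
point of `V(I·R)`, then there is an étale `R`-algebra `R'` with `R/IR ≅ R'/IR'` which is
smooth over `A`. -/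
theorem exists_etale_smooth_of_smooth_on_closed_fiber
    {A R : Type u} [CommRing A] [CommRing R] [Algebra A R]
    (I : Ideal A) [HenselianRing A I]
    (hfp : Algebra.FinitePresentation A R)
    (hsm : ∀ (q : Ideal R) (_ : q.IsPrime), I.map (algebraMap A R) ≤ q →
      ∃ g : R, g ∉ q ∧
        RingHomSmooth ((algebraMap R (Localization.Away g)).comp (algebraMap A R))) :
    ∃ (R' : Type u) (_ : CommRing R') (_ : Algebra R R'),
      Algebra.Etale R R' ∧
      Function.Bijective (Ideal.quotientMap
        ((I.map (algebraMap A R)).map (algebraMap R R')) (algebraMap R R')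
        Ideal.le_comap_map) ∧
      RingHomSmooth ((algebraMap R R').comp (algebraMap A R)) :=
  exists_etale_smooth_of_smooth_on_closed_fiber_general (algebraMap A R)
    (I.map (algebraMap A R)) hsm
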